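/- arXiv:0804.1715 — 2 statements merged into one kernel-verified Lean document; each statement's English description precedes it below -/
import Mathlib

section
/- Let L ≥ 1, a < b with b − a ≥ 1, k ≥ 1 an integer and r > 0. For each odd integer n ≥ 3 and each S ∈ Σ_L, let λ̃ = λ̃_{n,S} denote the Pinsker weight sequence with parameter t = t̃_n(S). Then lim_{n→∞, n odd} sup_{S ∈ Σ_L} | n^{−1/(2k+1)} Σ_{j=1}^n λ̃(j)² − (A_k · r/J(S))^{1/(2k+1)} · 2k²/((k+1)(2k+1)) | = 0. -/
open MeasureTheory Real Set Filter

noncomputable section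

/-- `f` is Lipschitz with constant `L` and continuous. -/
def IsLip (L : ℝ) (f : ℝ → ℝ) : Prop :=
  Continuous f ∧ ∀ x y : ℝ, |f x - f y| ≤ L * |x - y|

/-- The functional class `Σ_L`. -/
def SigmaL (L : ℝ) (S : ℝ → ℝ) : Prop :=
  IsLip L S ∧ (∀ z : ℝ, |z| ≤ L → |S z| ≤ L) ∧
  ∃ S' : ℝ → ℝ, ContinuousOn S' {x : ℝ | L ≤ |x|} ∧
    ∀ x : ℝ, L ≤ |x| → HasDerivAt S (S' x) x ∧ -L ≤ S' x ∧ S' x ≤ -(1/L)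

/-- Normalizing constant of the ergodic density. -/
def qdenom (S : ℝ → ℝ) : ℝ := ∫ y : ℝ, Real.exp (2 * ∫ z in (0:ℝ)..y, S z)

/-- The ergodic density `q_S`. -/
def qdens (S : ℝ → ℝ) (x : ℝ) : ℝ :=
  Real.exp (2 * ∫ z in (0:ℝ)..x, S z) / qdenom S

/-- `J(S) = ∫_a^b 1/q_S(u) du`. -/
def Jfun (a b : ℝ) (S : ℝ → ℝ) : ℝ := ∫ u in a..b, 1 / qdens S u

end

noncomputable section

/-- `ε_n = 1 / ln n`. -/
def epsn (n : ℕ) : ℝ := 1 / Real.log n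

/-- `t̃_n(S) = ε_n · min{ i ≥ 1 : i ε_n ≥ r/J(S) }`. -/
def ttilde (a b r : ℝ) (n : ℕ) (S : ℝ → ℝ) : ℝ :=
  epsn n * (sInf {i : ℕ | 1 ≤ i ∧ r / Jfun a b S ≤ (i : ℝ) * epsn n} : ℕ)

/-- `A_k = (b−a)^{2k+1}(k+1)(2k+1)/(π^{2k} k)`. -/
def Ak (a b : ℝ) (k : ℕ) : ℝ :=
  (b - a) ^ (2 * k + 1) * ((k : ℝ) + 1) * (2 * (k : ℝ) + 1) / (Real.pi ^ (2 * k) * k)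

/-- `ω = (A_k t n)^{1/(2k+1)}`. -/
def pinskerOmega (a b : ℝ) (k : ℕ) (t : ℝ) (n : ℕ) : ℝ :=
  (Ak a b k * t * n) ^ ((1 : ℝ) / (2 * k + 1))

/-- `j_0 = ⌊ω / ln(n+2)⌋ + 1`. -/
def pinskerJ0 (a b : ℝ) (k : ℕ) (t : ℝ) (n : ℕ) : ℕ :=
  ⌊pinskerOmega a b k t n / Real.log (n + 2)⌋₊ + 1

/-- The Pinsker weights: `λ(j) = 1` for `j ≤ j_0`,
`λ(j) = (1 − (j/ω)^k)₊` for `j_0 < j ≤ n`, and `λ(j) = 0` for `j > n`. -/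
def pinskerWeight (a b : ℝ) (k : ℕ) (t : ℝ) (n : ℕ) (j : ℕ) : ℝ :=
  if j ≤ pinskerJ0 a b k t n then 1
  else if j ≤ n then max 0 (1 - ((j : ℝ) / pinskerOmega a b k t n) ^ k)
  else 0

end

/-!
The weights `λ(j)` sample the profile `φ(x) = (1 − x^k)₊` at the points `j/ω`, except that the
first `j₀ = O(ω / ln n + 1)` of them are raised to `1`. As `φ²` is antitone with values in `[0, 1]`,
`∑ φ(j/ω)²` differs from `ω ∫₀¹ (1 − x^k)² dx` by at most `1`, while
`n^{−1/(2k+1)} ω = (A_k t)^{1/(2k+1)}`. This gives the limit uniformly for `t` in any interval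
`(0, M]`.

It remains to insert `t = t̃_n(S)`. Rounding up to the grid `ε_n ℕ` moves `r / J(S)` by at most
`ε_n → 0`, and `r / J(S)` stays in a fixed `(0, M]` because `J` is bounded below on `Σ_L` by a
positive constant. For this bound, the drift is dissipative, `x S(x) ≤ (L + 1)|x| − x²/L`, so that
the ergodic density is well defined, and `|S(x)| ≤ L + L|x|` bounds its reciprocal from below on
bounded sets.
-/

section UniformConvergence

variable {ι α β γ : Type*} {l : Filter ι}

lemma tendstoUniformlyOn_of_eventually_dist_le [PseudoMetricSpace β] {F : ι → α → β} {f : α → β}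
    {s : Set α} {u : ι → ℝ} (hu : Tendsto u l (nhds 0))
    (h : ∀ᶠ i in l, ∀ x ∈ s, dist (f x) (F i x) ≤ u i) : TendstoUniformlyOn F f l s := by
  refine Metric.tendstoUniformlyOn_iff.2 fun ε hε => ?_
  filter_upwards [h, hu.eventually_lt_const hε] with i hi hui x hx using (hi x hx).trans_lt hui

lemma tendstoUniformlyOn_comp_of_uniformContinuousOn [UniformSpace β] [UniformSpace γ]
    {F : ι → β → γ} {G : β → γ} {τ : ι → α → β} {T : α → β} {s : Set β} {u : Set α}
    (hF : TendstoUniformlyOn F G l s) (hG : UniformContinuousOn G s)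
    (hτ : TendstoUniformlyOn τ T l u) (hτs : ∀ᶠ i in l, ∀ x ∈ u, τ i x ∈ s)
    (hTs : ∀ x ∈ u, T x ∈ s) :
    TendstoUniformlyOn (fun i x => F i (τ i x)) (fun x => G (T x)) l u := by
  intro V hV
  obtain ⟨W, hW, hWV⟩ := comp_mem_uniformity_sets hV
  filter_upwards [hF W hW, hG.comp_tendstoUniformlyOn_eventually hτs hTs hτ W hW, hτs]
    with i hFi hGi hτi x hx
  exact hWV ⟨_, hGi x hx, hFi _ (hτi x hx)⟩

end UniformConvergence

section Sums

lemma abs_sum_sub_integral_le_of_antitoneOn {f : ℝ → ℝ} {n : ℕ} (hf : AntitoneOn f (Icc 0 n)) :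
    |∑ j ∈ Finset.Icc 1 n, f j - ∫ x in (0 : ℝ)..n, f x| ≤ f 0 - f n := by
  have hf' : AntitoneOn f (Icc ((0 : ℕ) : ℝ) n) := by simpa only [Nat.cast_zero] using hf
  have hlower := hf'.sum_le_integral_Ico n.zero_le
  have hupper := hf'.integral_le_sum_Ico n.zero_le
  have hshift : ∑ i ∈ Finset.Ico 0 n, f ↑(i + 1) = ∑ j ∈ Finset.Icc 1 n, f j :=
    Finset.sum_Ico_add' (fun j : ℕ => f j) 0 n 1
  have hends : ∑ i ∈ Finset.Ico 0 n, f ↑(i + 1) + f 0 = ∑ i ∈ Finset.Ico 0 n, f i + f n := by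
    have h := (Finset.sum_range_succ' (fun i : ℕ => f i) n).symm.trans
      (Finset.sum_range_succ (fun i : ℕ => f i) n)
    simpa only [Nat.Ico_zero_eq_range, Nat.cast_zero] using h
  rw [Nat.cast_zero] at hlower hupper
  rw [abs_le]
  constructor <;> linarith

lemma abs_sum_Icc_sub_sum_Icc_le {f g : ℕ → ℝ} {m n : ℕ} (hclose : ∀ j ≤ m, |f j - g j| ≤ 1)
    (heq : ∀ j ≤ n, m < j → f j = g j) :
    |∑ j ∈ Finset.Icc 1 n, f j - ∑ j ∈ Finset.Icc 1 n, g j| ≤ m := by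
  have hterm : ∀ j ∈ Finset.Icc 1 n, |f j - g j| ≤ if j ∈ Finset.Icc 1 m then 1 else 0 := by
    intro j hj
    obtain ⟨hj1, hjn⟩ := Finset.mem_Icc.1 hj
    split_ifs with hjm
    · exact hclose j (Finset.mem_Icc.1 hjm).2
    · have hmj : m < j := not_le.1 fun h => hjm (Finset.mem_Icc.2 ⟨hj1, h⟩)
      simp [heq j hjn hmj]
  calc |∑ j ∈ Finset.Icc 1 n, f j - ∑ j ∈ Finset.Icc 1 n, g j|
      ≤ ∑ j ∈ Finset.Icc 1 n, |f j - g j| := by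
        rw [← Finset.sum_sub_distrib]; exact Finset.abs_sum_le_sum_abs _ _
    _ ≤ ∑ j ∈ Finset.Icc 1 n, if j ∈ Finset.Icc 1 m then (1 : ℝ) else 0 :=
        Finset.sum_le_sum hterm
    _ = (Finset.Icc 1 n ∩ Finset.Icc 1 m).card := by
        rw [Finset.sum_boole, Finset.filter_mem_eq_inter]
    _ ≤ m := by
        exact_mod_cast (Finset.card_le_card Finset.inter_subset_right).trans
          (Nat.card_Icc 1 m).le

end Sums

section PinskerProfile

/-- The profile `φ(x) = (1 − x^k)₊` such that `λ(j) = φ(j/ω)` for `j₀ < j ≤ n`. -/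
def pinskerProfile (k : ℕ) (x : ℝ) : ℝ := max 0 (1 - x ^ k)

variable {k n : ℕ} {x w : ℝ}

lemma continuous_pinskerProfile : Continuous (pinskerProfile k) := by
  unfold pinskerProfile
  fun_prop

lemma pinskerProfile_nonneg : 0 ≤ pinskerProfile k x := le_max_left _ _

lemma pinskerProfile_le_one (hx : 0 ≤ x) : pinskerProfile k x ≤ 1 :=
  max_le zero_le_one (sub_le_self _ (pow_nonneg hx k))

lemma pinskerProfile_of_le_one (hx : 0 ≤ x) (hx1 : x ≤ 1) : pinskerProfile k x = 1 - x ^ k :=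
  max_eq_right (sub_nonneg.2 (pow_le_one₀ hx hx1))

lemma pinskerProfile_of_one_le (hx : 1 ≤ x) : pinskerProfile k x = 0 :=
  max_eq_left (sub_nonpos.2 (one_le_pow₀ hx))

lemma antitoneOn_pinskerProfile_sq : AntitoneOn (fun x => pinskerProfile k x ^ 2) (Ici 0) := by
  intro x hx y _ hxy
  have hx0 : 0 ≤ x := hx
  simp only [pinskerProfile]
  gcongr

lemma integral_one_sub_pow_sq (k : ℕ) :
    ∫ x in (0 : ℝ)..1, (1 - x ^ k) ^ 2 =
      2 * (k : ℝ) ^ 2 / (((k : ℝ) + 1) * (2 * (k : ℝ) + 1)) := by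
  have hexpand (x : ℝ) : (1 - x ^ k) ^ 2 = 1 - 2 * x ^ k + x ^ (2 * k) := by ring
  simp_rw [hexpand]
  rw [intervalIntegral.integral_add, intervalIntegral.integral_sub,
    intervalIntegral.integral_const_mul, integral_pow, integral_pow]
  · simp only [intervalIntegral.integral_const, one_pow, zero_pow (Nat.succ_ne_zero _), sub_zero,
      smul_eq_mul, Nat.cast_mul, Nat.cast_ofNat]
    field_simp
    ring
  all_goals exact Continuous.intervalIntegrable (by fun_prop) _ _

lemma integral_pinskerProfile_sq {y : ℝ} (hy : 1 ≤ y) :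
    ∫ x in (0 : ℝ)..y, pinskerProfile k x ^ 2 = ∫ x in (0 : ℝ)..1, (1 - x ^ k) ^ 2 := by
  have hint (c d : ℝ) : IntervalIntegrable (fun x => pinskerProfile k x ^ 2) volume c d :=
    (continuous_pinskerProfile.pow 2).intervalIntegrable c d
  have hleft : ∫ x in (0 : ℝ)..1, pinskerProfile k x ^ 2 =
      ∫ x in (0 : ℝ)..1, (1 - x ^ k) ^ 2 := by
    refine intervalIntegral.integral_congr fun x hx => ?_
    rw [uIcc_of_le zero_le_one] at hx
    simp only [pinskerProfile_of_le_one hx.1 hx.2]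
  have hright : ∫ x in (1 : ℝ)..y, pinskerProfile k x ^ 2 = 0 := by
    refine intervalIntegral.integral_zero_ae (Eventually.of_forall fun x hx => ?_)
    rw [uIoc_of_le hy] at hx
    rw [pinskerProfile_of_one_le hx.1.le, zero_pow two_ne_zero]
  rw [← intervalIntegral.integral_add_adjacent_intervals (hint 0 1) (hint 1 y), hleft, hright,
    add_zero]

lemma abs_sum_pinskerProfile_sq_sub_le (hw : 0 < w) (hwn : w ≤ n) :
    |∑ j ∈ Finset.Icc 1 n, pinskerProfile k (j / w) ^ 2 -
      w * ∫ x in (0 : ℝ)..1, (1 - x ^ k) ^ 2| ≤ 1 := by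
  have hanti : AntitoneOn (fun x => pinskerProfile k (x / w) ^ 2) (Icc 0 n) := fun x hx y hy hxy =>
    antitoneOn_pinskerProfile_sq (div_nonneg hx.1 hw.le) (div_nonneg hy.1 hw.le) (by gcongr)
  have hintegral : ∫ x in (0 : ℝ)..n, pinskerProfile k (x / w) ^ 2 =
      w * ∫ x in (0 : ℝ)..1, (1 - x ^ k) ^ 2 := by
    rw [intervalIntegral.integral_comp_div (fun y => pinskerProfile k y ^ 2) hw.ne', zero_div,
      integral_pinskerProfile_sq ((one_le_div hw).2 hwn), smul_eq_mul]
  rw [← hintegral]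
  calc _ ≤ pinskerProfile k (0 / w) ^ 2 - pinskerProfile k (n / w) ^ 2 :=
        abs_sum_sub_integral_le_of_antitoneOn hanti
    _ ≤ pinskerProfile k (0 / w) ^ 2 := sub_le_self _ (sq_nonneg _)
    _ ≤ 1 := pow_le_one₀ pinskerProfile_nonneg (pinskerProfile_le_one (by simp))

end PinskerProfile

section PinskerWeight

variable {a b t : ℝ} {k n : ℕ}

lemma Ak_pos (hab : a < b) (hk : 1 ≤ k) : 0 < Ak a b k := by
  have : 0 < b - a := sub_pos.2 hab
  unfold Ak
  positivity

lemma pinskerOmega_pos (hA : 0 < Ak a b k) (ht : 0 < t) (hn : 0 < n) :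
    0 < pinskerOmega a b k t n := by
  unfold pinskerOmega
  positivity

lemma pinskerOmega_le (hk : 1 ≤ k) (hAt : 0 ≤ Ak a b k * t) (hAtn : Ak a b k * t ≤ n) :
    pinskerOmega a b k t n ≤ n := by
  have hn0 : (0 : ℝ) ≤ n := n.cast_nonneg
  have hpow : Ak a b k * t * n ≤ (n : ℝ) ^ (2 * k + 1) := by
    rw [pow_succ]
    gcongr
    exact hAtn.trans (by exact_mod_cast Nat.le_self_pow (by omega) n)
  unfold pinskerOmega
  rw [one_div, rpow_inv_le_iff_of_pos (by positivity) hn0 (by positivity)]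
  exact_mod_cast hpow

lemma rpow_mul_pinskerOmega (hAt : 0 ≤ Ak a b k * t) (hn : 0 < n) :
    (n : ℝ) ^ (-(1 : ℝ) / (2 * k + 1)) * pinskerOmega a b k t n =
      (Ak a b k * t) ^ ((1 : ℝ) / (2 * k + 1)) := by
  have hn0 : (0 : ℝ) < n := Nat.cast_pos.2 hn
  rw [pinskerOmega, mul_rpow hAt hn0.le, mul_left_comm, ← rpow_add hn0, neg_div, neg_add_cancel,
    rpow_zero, mul_one]

lemma pinskerWeight_of_le {j : ℕ} (hj : j ≤ pinskerJ0 a b k t n) :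
    pinskerWeight a b k t n j = 1 :=
  if_pos hj

lemma pinskerWeight_of_lt {j : ℕ} (hj : pinskerJ0 a b k t n < j) (hjn : j ≤ n) :
    pinskerWeight a b k t n j = pinskerProfile k (j / pinskerOmega a b k t n) := by
  rw [pinskerWeight, if_neg hj.not_ge, if_pos hjn, pinskerProfile]

lemma abs_sum_pinskerWeight_sq_sub_le (hω : 0 < pinskerOmega a b k t n)
    (hωn : pinskerOmega a b k t n ≤ n) :
    |∑ j ∈ Finset.Icc 1 n, pinskerWeight a b k t n j ^ 2 -
      pinskerOmega a b k t n * ∫ x in (0 : ℝ)..1, (1 - x ^ k) ^ 2| ≤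
      2 + pinskerOmega a b k t n / Real.log (n + 2) := by
  set ω := pinskerOmega a b k t n
  have hhead : ∀ j ≤ pinskerJ0 a b k t n,
      |pinskerWeight a b k t n j ^ 2 - pinskerProfile k (j / ω) ^ 2| ≤ 1 := by
    intro j hj
    have h0 : 0 ≤ pinskerProfile k (j / ω) := pinskerProfile_nonneg
    have h1 : pinskerProfile k (j / ω) ≤ 1 := pinskerProfile_le_one (by positivity)
    rw [pinskerWeight_of_le hj, abs_le]
    constructor <;> nlinarith
  have hweight := abs_sum_Icc_sub_sum_Icc_le hhead
    fun j hjn hj => by rw [pinskerWeight_of_lt hj hjn]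
  have hJ0 : (pinskerJ0 a b k t n : ℝ) ≤ ω / Real.log (n + 2) + 1 := by
    have hlog : 0 ≤ Real.log ((n : ℝ) + 2) := log_nonneg (by linarith [n.cast_nonneg (α := ℝ)])
    rw [pinskerJ0, Nat.cast_add_one]
    gcongr
    exact Nat.floor_le (div_nonneg hω.le hlog)
  calc _ ≤ _ := abs_sub_le _ (∑ j ∈ Finset.Icc 1 n, pinskerProfile k (j / ω) ^ 2) _
    _ ≤ (ω / Real.log (n + 2) + 1) + 1 :=
        add_le_add (hweight.trans hJ0) (abs_sum_pinskerProfile_sq_sub_le hω hωn)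
    _ = _ := by ring

lemma abs_rpow_mul_sum_pinskerWeight_sq_sub_le (hk : 1 ≤ k) (hA : 0 < Ak a b k) (ht : 0 < t)
    (hn : 0 < n) (hAtn : Ak a b k * t ≤ n) :
    |(n : ℝ) ^ (-(1 : ℝ) / (2 * k + 1)) * (∑ j ∈ Finset.Icc 1 n, pinskerWeight a b k t n j ^ 2) -
      (Ak a b k * t) ^ ((1 : ℝ) / (2 * k + 1)) * ∫ x in (0 : ℝ)..1, (1 - x ^ k) ^ 2| ≤
      2 * (n : ℝ) ^ (-(1 : ℝ) / (2 * k + 1)) +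
        (Ak a b k * t) ^ ((1 : ℝ) / (2 * k + 1)) / Real.log (n + 2) := by
  have hAt : 0 ≤ Ak a b k * t := by positivity
  have hsum := abs_sum_pinskerWeight_sq_sub_le (pinskerOmega_pos hA ht hn)
    (pinskerOmega_le hk hAt hAtn)
  have hscale : 0 ≤ (n : ℝ) ^ (-(1 : ℝ) / (2 * k + 1)) := by positivity
  rw [← rpow_mul_pinskerOmega hAt hn, mul_assoc, ← mul_sub, abs_mul, abs_of_nonneg hscale]
  exact (mul_le_mul_of_nonneg_left hsum hscale).trans_eq (by ring)

theorem tendstoUniformlyOn_rpow_mul_sum_pinskerWeight_sq (hk : 1 ≤ k) (hA : 0 < Ak a b k)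
    (M : ℝ) :
    TendstoUniformlyOn
      (fun (n : ℕ) t => (n : ℝ) ^ (-(1 : ℝ) / (2 * k + 1)) *
        ∑ j ∈ Finset.Icc 1 n, pinskerWeight a b k t n j ^ 2)
      (fun t => (Ak a b k * t) ^ ((1 : ℝ) / (2 * k + 1)) * ∫ x in (0 : ℝ)..1, (1 - x ^ k) ^ 2)
      atTop (Ioc 0 M) := by
  have hp : 0 < (1 : ℝ) / (2 * k + 1) := by positivity
  have hscale : Tendsto (fun n : ℕ => 2 * (n : ℝ) ^ (-(1 : ℝ) / (2 * k + 1))) atTop (nhds 0) := by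
    have h := ((tendsto_rpow_neg_atTop hp).comp tendsto_natCast_atTop_atTop).const_mul (2 : ℝ)
    simpa only [mul_zero, neg_div, Function.comp_apply] using h
  have hhead : Tendsto (fun n : ℕ =>
      (Ak a b k * M) ^ ((1 : ℝ) / (2 * k + 1)) / Real.log (n + 2)) atTop (nhds 0) :=
    (tendsto_log_atTop.comp (tendsto_atTop_add_const_right _ _
      tendsto_natCast_atTop_atTop)).const_div_atTop _
  have hbound := hscale.add hhead
  rw [add_zero] at hbound
  refine tendstoUniformlyOn_of_eventually_dist_le hbound ?_
  filter_upwards [eventually_gt_atTop 0,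
    tendsto_natCast_atTop_atTop.eventually_ge_atTop (Ak a b k * M)] with n hn hAM t ht
  have hAtM : Ak a b k * t ≤ Ak a b k * M := by gcongr; exact ht.2
  have hAt : 0 ≤ Ak a b k * t := mul_nonneg hA.le ht.1.le
  have hlog : 0 ≤ Real.log ((n : ℝ) + 2) := log_nonneg (by linarith [n.cast_nonneg (α := ℝ)])
  rw [dist_comm, Real.dist_eq]
  refine (abs_rpow_mul_sum_pinskerWeight_sq_sub_le hk hA ht.1 hn (hAtM.trans hAM)).trans ?_
  gcongr

lemma uniformContinuousOn_mul_rpow_mul {p : ℝ} (hp : 0 ≤ p) (A C M : ℝ) :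
    UniformContinuousOn (fun t => (A * t) ^ p * C) (Ioc 0 M) := by
  have hcont : Continuous fun t => (A * t) ^ p * C :=
    ((continuous_const_mul A).rpow_const fun _ => Or.inr hp).mul_const C
  exact (isCompact_Icc.uniformContinuousOn_of_continuous hcont.continuousOn).mono
    Ioc_subset_Icc_self

end PinskerWeight

section Grid

variable {a b r : ℝ} {n : ℕ} {S : ℝ → ℝ}

lemma epsn_pos (hn : 2 ≤ n) : 0 < epsn n :=
  one_div_pos.2 (log_pos (by exact_mod_cast hn))

lemma tendsto_epsn : Tendsto epsn atTop (nhds 0) :=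
  (tendsto_log_atTop.comp tendsto_natCast_atTop_atTop).const_div_atTop 1

lemma ttilde_eq_mul_ceil (hε : 0 < epsn n) (hT : 0 < r / Jfun a b S) :
    ttilde a b r n S = epsn n * ⌈r / Jfun a b S / epsn n⌉₊ := by
  have hleast : IsLeast {i : ℕ | 1 ≤ i ∧ r / Jfun a b S ≤ (i : ℝ) * epsn n}
      ⌈r / Jfun a b S / epsn n⌉₊ :=
    ⟨⟨Nat.ceil_pos.2 (div_pos hT hε), (div_le_iff₀ hε).1 (Nat.le_ceil _)⟩,
      fun i hi => Nat.ceil_le.2 ((div_le_iff₀ hε).2 hi.2)⟩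
  rw [ttilde, hleast.csInf_eq]

lemma ttilde_mem_Icc (hε : 0 < epsn n) (hT : 0 < r / Jfun a b S) :
    ttilde a b r n S ∈ Icc (r / Jfun a b S) (r / Jfun a b S + epsn n) := by
  rw [ttilde_eq_mul_ceil hε hT]
  have hlower := (div_le_iff₀' hε).1 (Nat.le_ceil (r / Jfun a b S / epsn n))
  have hupper := Nat.ceil_lt_add_one (div_pos hT hε).le
  refine ⟨hlower, (mul_le_mul_of_nonneg_left hupper.le hε.le).trans_eq ?_⟩
  rw [mul_add, mul_div_cancel₀ _ hε.ne', mul_one]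

lemma tendstoUniformlyOn_ttilde (a b r : ℝ) :
    TendstoUniformlyOn (ttilde a b r) (fun S => r / Jfun a b S) atTop
      {S | 0 < r / Jfun a b S} := by
  refine tendstoUniformlyOn_of_eventually_dist_le tendsto_epsn ?_
  filter_upwards [eventually_ge_atTop 2] with n hn S hS
  have hmem := ttilde_mem_Icc (epsn_pos hn) hS
  rw [dist_comm, Real.dist_eq, abs_of_nonneg (sub_nonneg.2 hmem.1)]
  linarith [hmem.2]

end Grid

namespace SigmaL

variable {L : ℝ} {S : ℝ → ℝ}

lemma abs_apply_le (hL : 0 ≤ L) (hS : SigmaL L S) (x : ℝ) : |S x| ≤ L + L * |x| := by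
  have h0 : |S 0| ≤ L := hS.2.1 0 (by simpa only [abs_zero] using hL)
  have hlip : |S x - S 0| ≤ L * |x| := by simpa only [sub_zero] using hS.1.2 x 0
  calc |S x| = |S 0 + (S x - S 0)| := by rw [add_sub_cancel]
    _ ≤ |S 0| + |S x - S 0| := abs_add_le _ _
    _ ≤ L + L * |x| := add_le_add h0 hlip

lemma apply_sub_apply_le (hS : SigmaL L S) {D : Set ℝ} (hD : Convex ℝ D)
    (hDL : ∀ x ∈ D, L ≤ |x|) {x y : ℝ} (hx : x ∈ D) (hy : y ∈ D) (hxy : x ≤ y) :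
    S y - S x ≤ -(1 / L) * (y - x) := by
  obtain ⟨S', -, hS'⟩ := hS.2.2
  have hderiv {z : ℝ} (hz : z ∈ interior D) := hS' z (hDL z (interior_subset hz))
  exact hD.image_sub_le_mul_sub_of_deriv_le hS.1.1.continuousOn
    (fun z hz => (hderiv hz).1.differentiableAt.differentiableWithinAt)
    (fun z hz => (hderiv hz).1.deriv.trans_le (hderiv hz).2.2) x hx y hy hxy

lemma mul_apply_le (hL : 0 < L) (hS : SigmaL L S) (x : ℝ) :
    x * S x ≤ (L + 1) * |x| - x ^ 2 / L := by
  have hquad : x ^ 2 / L = |x| * (|x| / L) := by rw [← sq_abs]; ring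
  have hbound {z : ℝ} (hz : |z| ≤ L) : |S z| ≤ L := hS.2.1 z hz
  suffices h : x * S x ≤ |x| * (L + 1 - |x| / L) by rw [hquad]; linarith
  rcases le_total |x| L with hx | hx
  · have hle : |x| / L ≤ 1 := (div_le_one hL).2 hx
    calc x * S x ≤ |x| * |S x| := (le_abs_self _).trans_eq (abs_mul _ _)
      _ ≤ |x| * (L + 1 - |x| / L) := by gcongr; linarith [hbound hx]
  · rcases le_abs.1 hx with hx' | hx'
    · have hdecay := hS.apply_sub_apply_le (convex_Ici L) (fun z hz => le_abs.2 (Or.inl hz))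
        self_mem_Ici hx' hx'
      have hSL := (le_abs_self _).trans (hbound (abs_of_pos hL).le)
      have hslope : -(1 / L) * (x - L) = 1 - x / L := by field_simp; ring
      rw [abs_of_nonneg (hL.le.trans hx')]
      gcongr
      · linarith
      · linarith
    · have hxL : x ≤ -L := by linarith
      have hdecay := hS.apply_sub_apply_le (convex_Iic (-L))
        (fun z hz => le_abs.2 (Or.inr (le_neg.2 hz))) hxL self_mem_Iic hxL
      have hSL := (neg_le_abs _).trans (hbound (z := -L) (by rw [abs_neg, abs_of_pos hL]))
      have hslope : -(1 / L) * (-L - x) = 1 - -x / L := by field_simp; ring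
      rw [abs_of_nonpos (by linarith), ← neg_mul_neg]
      gcongr
      · linarith
      · linarith

lemma abs_integral_le (hL : 0 ≤ L) (hS : SigmaL L S) {B x : ℝ} (hx : |x| ≤ B) :
    |∫ z in (0 : ℝ)..x, S z| ≤ (L + L * B) * B := by
  have hbound : ∀ z ∈ uIoc 0 x, ‖S z‖ ≤ L + L * B := by
    intro z hz
    have hzx : |z| ≤ |x| := by
      simpa only [sub_zero] using abs_sub_left_of_mem_uIcc (uIoc_subset_uIcc hz)
    calc ‖S z‖ ≤ L + L * |z| := hS.abs_apply_le hL z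
      _ ≤ L + L * B := by gcongr; exact hzx.trans hx
  have hB : 0 ≤ B := (abs_nonneg x).trans hx
  calc |∫ z in (0 : ℝ)..x, S z| ≤ (L + L * B) * |x - 0| :=
        intervalIntegral.norm_integral_le_of_norm_le_const hbound
    _ ≤ (L + L * B) * B := by rw [sub_zero]; gcongr

lemma integral_le (hL : 0 < L) (hS : SigmaL L S) (x : ℝ) :
    ∫ z in (0 : ℝ)..x, S z ≤ (L + 1) * |x| - x ^ 2 / (2 * L) := by
  have hcont : Continuous S := hS.1.1
  have hray : ∀ t ∈ Ioo (0 : ℝ) 1, x * S (x * t) ≤ (L + 1) * |x| - t * (x ^ 2 / L) := by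
    intro t ht
    have h := hS.mul_apply_le hL (x * t)
    rw [abs_mul, abs_of_pos ht.1] at h
    refine le_of_mul_le_mul_left ?_ ht.1
    calc t * (x * S (x * t)) = x * t * S (x * t) := by ring
      _ ≤ _ := h
      _ = _ := by ring
  calc ∫ z in (0 : ℝ)..x, S z = ∫ t in (0 : ℝ)..1, x * S (x * t) := by
        rw [intervalIntegral.integral_const_mul, intervalIntegral.mul_integral_comp_mul_left,
          mul_zero, mul_one]
    _ ≤ ∫ t in (0 : ℝ)..1, ((L + 1) * |x| - t * (x ^ 2 / L)) :=
        intervalIntegral.integral_mono_on_of_le_Ioo zero_le_one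
          (Continuous.intervalIntegrable (by fun_prop) _ _)
          (Continuous.intervalIntegrable (by fun_prop) _ _) hray
    _ = (L + 1) * |x| - x ^ 2 / (2 * L) := by
        rw [intervalIntegral.integral_sub intervalIntegrable_const
          (Continuous.intervalIntegrable (by fun_prop) _ _), intervalIntegral.integral_const,
          intervalIntegral.integral_mul_const, integral_id, smul_eq_mul]
        ring

lemma continuous_exp_integral (hS : SigmaL L S) :
    Continuous fun x => Real.exp (2 * ∫ z in (0 : ℝ)..x, S z) := by
  have h := intervalIntegral.continuous_primitive (μ := volume)
    (fun x y => hS.1.1.intervalIntegrable x y) 0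
  fun_prop

theorem integrable_exp_integral (hL : 0 < L) (hS : SigmaL L S) :
    Integrable fun x => Real.exp (2 * ∫ z in (0 : ℝ)..x, S z) := by
  have hgauss : Integrable fun x : ℝ =>
      Real.exp (2 * L * (L + 1) ^ 2) * Real.exp (-(1 / (2 * L)) * x ^ 2) :=
    (integrable_exp_neg_mul_sq (by positivity)).const_mul _
  refine hgauss.mono' hS.continuous_exp_integral.aestronglyMeasurable
    (Eventually.of_forall fun x => ?_)
  -- AM-GM: `2 (L + 1) |x| ≤ x² / (2L) + 2L (L + 1)²`.
  have hsquare : 0 ≤ (|x| - 2 * L * (L + 1)) ^ 2 / (2 * L) := by positivity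
  have hexpand : (|x| - 2 * L * (L + 1)) ^ 2 / (2 * L) =
      x ^ 2 / (2 * L) - 2 * ((L + 1) * |x|) + 2 * L * (L + 1) ^ 2 := by
    rw [← sq_abs x]; field_simp; ring
  have hslope : -(1 / (2 * L)) * x ^ 2 = -(x ^ 2 / (2 * L)) := by ring
  rw [norm_eq_abs, abs_exp, ← Real.exp_add, exp_le_exp]
  linarith [hS.integral_le hL x]

lemma exp_le_qdenom (hL : 0 < L) (hS : SigmaL L S) : Real.exp (-(4 * L)) ≤ qdenom S := by
  have hint := hS.integrable_exp_integral hL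
  have hlower : ∀ x ∈ Icc (0 : ℝ) 1,
      Real.exp (-(4 * L)) ≤ Real.exp (2 * ∫ z in (0 : ℝ)..x, S z) := by
    intro x hx
    have h := hS.abs_integral_le hL.le (B := 1) (by rw [abs_of_nonneg hx.1]; exact hx.2)
    refine exp_le_exp.2 ?_
    linarith [neg_abs_le (∫ z in (0 : ℝ)..x, S z)]
  calc Real.exp (-(4 * L)) = ∫ _ in Icc (0 : ℝ) 1, Real.exp (-(4 * L)) := by simp
    _ ≤ ∫ x in Icc (0 : ℝ) 1, Real.exp (2 * ∫ z in (0 : ℝ)..x, S z) :=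
        setIntegral_mono_on (by simp) hint.integrableOn measurableSet_Icc hlower
    _ ≤ qdenom S :=
        setIntegral_le_integral hint (Eventually.of_forall fun x => (Real.exp_pos _).le)

lemma exp_le_one_div_qdens (hL : 0 < L) (hS : SigmaL L S) {B x : ℝ} (hx : |x| ≤ B) :
    Real.exp (-(4 * L) - 2 * ((L + L * B) * B)) ≤ 1 / qdens S x := by
  have hI := (le_abs_self _).trans (hS.abs_integral_le hL.le hx)
  rw [qdens, one_div_div, Real.exp_sub]
  have hq := hS.exp_le_qdenom hL
  gcongr
  exact (Real.exp_pos _).le.trans hq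

lemma continuous_one_div_qdens (hL : 0 < L) (hS : SigmaL L S) :
    Continuous fun x => 1 / qdens S x := by
  have hq : qdenom S ≠ 0 := ((Real.exp_pos _).trans_le (hS.exp_le_qdenom hL)).ne'
  exact continuous_const.div (hS.continuous_exp_integral.div_const _)
    fun x => div_ne_zero (Real.exp_ne_zero _) hq

theorem exists_pos_forall_le_Jfun {a b : ℝ} (hL : 0 < L) (hab : a < b) :
    ∃ c : ℝ, 0 < c ∧ ∀ S : ℝ → ℝ, SigmaL L S → c ≤ Jfun a b S := by
  set B := max |a| |b|
  set m := Real.exp (-(4 * L) - 2 * ((L + L * B) * B))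
  refine ⟨(b - a) * m, mul_pos (sub_pos.2 hab) (Real.exp_pos _), fun S hS => ?_⟩
  calc (b - a) * m = ∫ _ in a..b, m := by rw [intervalIntegral.integral_const, smul_eq_mul]
    _ ≤ Jfun a b S := intervalIntegral.integral_mono_on hab.le intervalIntegrable_const
        ((hS.continuous_one_div_qdens hL).intervalIntegrable a b)
        fun x hx => hS.exp_le_one_div_qdens hL (abs_le_max_abs_abs hx.1 hx.2)

end SigmaL

theorem stmt7_general {L a b r : ℝ} {k : ℕ} (hL : 0 < L) (hab : a < b) (hk : 1 ≤ k) (hr : 0 < r) :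
    TendstoUniformlyOn
      (fun (n : ℕ) S => (n : ℝ) ^ (-(1 : ℝ) / (2 * k + 1)) *
        ∑ j ∈ Finset.Icc 1 n, (pinskerWeight a b k (ttilde a b r n S) n j) ^ 2)
      (fun S => (Ak a b k * (r / Jfun a b S)) ^ ((1 : ℝ) / (2 * k + 1)) *
        (2 * (k : ℝ) ^ 2 / (((k : ℝ) + 1) * (2 * (k : ℝ) + 1))))
      atTop {S | SigmaL L S} := by
  obtain ⟨c, hc, hJ⟩ := SigmaL.exists_pos_forall_le_Jfun hL hab
  have hpos : ∀ S ∈ {S | SigmaL L S}, 0 < r / Jfun a b S := fun S hS =>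
    div_pos hr (hc.trans_le (hJ S hS))
  have hle : ∀ S ∈ {S | SigmaL L S}, r / Jfun a b S ≤ r / c := fun S hS =>
    div_le_div_of_nonneg_left hr.le hc (hJ S hS)
  have hmem : ∀ᶠ n in atTop, ∀ S ∈ {S | SigmaL L S}, ttilde a b r n S ∈ Ioc 0 (r / c + 1) := by
    filter_upwards [eventually_ge_atTop 2, tendsto_epsn.eventually_le_const one_pos]
      with n hn hε S hS
    have h := ttilde_mem_Icc (epsn_pos hn) (hpos S hS)
    exact ⟨(hpos S hS).trans_le h.1, h.2.trans (add_le_add (hle S hS) hε)⟩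
  rw [← integral_one_sub_pow_sq]
  exact tendstoUniformlyOn_comp_of_uniformContinuousOn
    (tendstoUniformlyOn_rpow_mul_sum_pinskerWeight_sq hk (Ak_pos hab hk) (r / c + 1))
    (uniformContinuousOn_mul_rpow_mul (by positivity) _ _ _)
    ((tendstoUniformlyOn_ttilde a b r).mono hpos) hmem
    fun S hS => ⟨hpos S hS, (hle S hS).trans (le_add_of_nonneg_right zero_le_one)⟩

/-- with `λ̃` the Pinsker weights with parameter `t̃_n(S)`,
`sup_{S∈Σ_L} | n^{−1/(2k+1)} Σ_{j=1}^n λ̃(j)² − (A_k r/J(S))^{1/(2k+1)} 2k²/((k+1)(2k+1)) | → 0`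
as odd `n → ∞`; stated as uniform convergence over `Σ_L`. -/
theorem stmt7 (L a b : ℝ) (hL : 1 ≤ L) (hab : a < b) (hba : 1 ≤ b - a)
    (k : ℕ) (hk : 1 ≤ k) (r : ℝ) (hr : 0 < r) :
    ∀ δ : ℝ, 0 < δ → ∃ N : ℕ, 3 ≤ N ∧ ∀ n : ℕ, N ≤ n → Odd n →
      ∀ S : ℝ → ℝ, SigmaL L S →
        |(n : ℝ) ^ (-(1 : ℝ) / (2 * k + 1)) *
            (∑ j ∈ Finset.Icc 1 n, (pinskerWeight a b k (ttilde a b r n S) n j) ^ 2) -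
          (Ak a b k * (r / Jfun a b S)) ^ ((1 : ℝ) / (2 * k + 1)) *
            (2 * (k : ℝ) ^ 2 / (((k : ℝ) + 1) * (2 * (k : ℝ) + 1)))| ≤ δ := by
  intro δ hδ
  have huniform := stmt7_general (zero_lt_one.trans_le hL) hab hk hr
  obtain ⟨N, hN⟩ := eventually_atTop.1 (Metric.tendstoUniformlyOn_iff.1 huniform δ hδ)
  refine ⟨max N 3, le_max_right _ _, fun n hn _ S hS => ?_⟩
  have hclose := hN n ((le_max_left _ _).trans hn) S hS
  rw [dist_comm, Real.dist_eq] at hclose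
  exact hclose.le
end

section
/- Let L ≥ 1, a < b with b − a ≥ 1, and ε > 0. Let S, S_0 ∈ Σ_L satisfy S(x) = S_0(x) for all x ∉ [a,b] and sup_{x ∈ [a,b]} |S(x) − S_0(x)| ≤ ε. Then for every x ∈ ℝ, |q_S(x) − q_{S_0}(x)| ≤ q_{S_0}(x) · (e^{4(b−a)ε} − 1); in particular sup_{x ∈ ℝ} |q_S(x) − q_{S_0}(x)| ≤ q^* (e^{4(b−a)ε} − 1), where q^* = sup_{x ∈ ℝ} sup_{S ∈ Σ_L} q_S(x). -/
open MeasureTheory Real Set Filter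

/-!
Up to a constant factor, `y ↦ exp (2 ∫_x^y S)` is the density of the speed measure of
`dX = S(X) dt + dW`, whatever the base point `x`. Moving the base point to `x` gives
`q_S(x) = (∫ exp (2 ∫_x^y S) dy)⁻¹`. Since `∫_x^y S` and `∫_x^y S₀` differ by at most
`‖S - S₀‖₁`, each of `q_S(x)`, `q_{S₀}(x)` is at most `exp (2 ‖S - S₀‖₁)` times the other. This is
twice as good in the exponent as bounding the numerator and the normalizing constant of
`q_S` separately. The drifts of `Σ_L` satisfy `z S(z) ≤ (L + 1)|z| - z² / L`, so their speed
densities have Gaussian tails and the normalizing constants are finite.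
-/

lemma abs_sub_le_mul_sub_one {p q K : ℝ} (hK : 1 ≤ K) (hq : 0 ≤ q) (hpq : p ≤ K * q)
    (hqp : q ≤ K * p) : |p - q| ≤ q * (K - 1) := by
  refine abs_sub_le_iff.2 ⟨by linarith, ?_⟩
  rcases le_total p q with h | h
  · calc q - p ≤ p * (K - 1) := by linarith
      _ ≤ q * (K - 1) := mul_le_mul_of_nonneg_right h (sub_nonneg.2 hK)
  · exact (sub_nonpos.2 h).trans (mul_nonneg hq (sub_nonneg.2 hK))

lemma abs_intervalIntegral_le_integral_abs {g : ℝ → ℝ} (hg : Integrable g) (x y : ℝ) :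
    |∫ z in x..y, g z| ≤ ∫ z, |g z| :=
  intervalIntegral.norm_integral_le_integral_norm_uIoc.trans <|
    setIntegral_le_integral hg.norm (.of_forall fun _ => norm_nonneg _)

lemma integrable_sub_of_eq_off_Icc {a b : ℝ} {f g : ℝ → ℝ} (hf : Continuous f)
    (hg : Continuous g) (heq : ∀ x ∉ Icc a b, f x = g x) : Integrable fun x => f x - g x :=
  (hf.sub hg).integrableOn_Icc.integrable_of_forall_notMem_eq_zero
    fun x hx => sub_eq_zero.2 (heq x hx)

lemma integral_abs_sub_le_of_eq_off_Icc {a b ε : ℝ} {f g : ℝ → ℝ} (hab : a ≤ b)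
    (heq : ∀ x ∉ Icc a b, f x = g x) (hclose : ∀ x ∈ Icc a b, |f x - g x| ≤ ε) :
    ∫ x, |f x - g x| ≤ (b - a) * ε :=
  calc ∫ x, |f x - g x| = ∫ x in Icc a b, |f x - g x| :=
        (setIntegral_eq_integral_of_forall_compl_eq_zero fun x hx => by simp [heq x hx]).symm
    _ ≤ ‖∫ x in Icc a b, |f x - g x|‖ := le_norm_self _
    _ ≤ ε * volume.real (Icc a b) :=
        norm_setIntegral_le_of_norm_le_const measure_Icc_lt_top (by simpa using hclose)
    _ = (b - a) * ε := by rw [volume_real_Icc_of_le hab, mul_comm]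

/-- The density at `y` of the speed measure of the diffusion `dX = S(X) dt + dW`, scaled to be `1`
at the base point `x` (so half of the customary normalization). -/
noncomputable def speedDensity (S : ℝ → ℝ) (x y : ℝ) : ℝ :=
  exp (2 * ∫ z in x..y, S z)

section SpeedDensity

variable {S S₀ : ℝ → ℝ}

lemma speedDensity_pos (S : ℝ → ℝ) (x y : ℝ) : 0 < speedDensity S x y :=
  exp_pos _

lemma speedDensity_mul_speedDensity (hS : ∀ x y, IntervalIntegrable S volume x y) (x y z : ℝ) :
    speedDensity S x y * speedDensity S y z = speedDensity S x z := by
  simp only [speedDensity, ← exp_add, ← mul_add,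
    intervalIntegral.integral_add_adjacent_intervals (hS x y) (hS y z)]

lemma continuous_speedDensity (hS : ∀ x y, IntervalIntegrable S volume x y) (x : ℝ) :
    Continuous (speedDensity S x) :=
  continuous_exp.comp (continuous_const.mul (intervalIntegral.continuous_primitive hS x))

lemma integrable_speedDensity_of_integrable (hS : ∀ x y, IntervalIntegrable S volume x y)
    {x₀ : ℝ} (h : Integrable (speedDensity S x₀)) (x : ℝ) : Integrable (speedDensity S x) := by
  simpa only [speedDensity_mul_speedDensity hS] using h.const_mul (speedDensity S x x₀)

lemma qdens_eq_inv_integral_speedDensity (hS : ∀ x y, IntervalIntegrable S volume x y) (x : ℝ) :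
    qdens S x = (∫ y, speedDensity S x y)⁻¹ := by
  have hbase : qdenom S = speedDensity S 0 x * ∫ y, speedDensity S x y := by
    simp only [← integral_const_mul, speedDensity_mul_speedDensity hS]
    rfl
  rw [qdens, hbase]
  exact div_mul_cancel_left₀ (speedDensity_pos S 0 x).ne' _

lemma speedDensity_le_exp_mul (hS : ∀ x y, IntervalIntegrable S volume x y)
    (hS₀ : ∀ x y, IntervalIntegrable S₀ volume x y) (hdiff : Integrable fun z => S z - S₀ z)
    (x y : ℝ) :
    speedDensity S x y ≤ exp (2 * ∫ z, |S z - S₀ z|) * speedDensity S₀ x y := by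
  have hsub := abs_intervalIntegral_le_integral_abs hdiff x y
  rw [intervalIntegral.integral_sub (hS x y) (hS₀ x y)] at hsub
  rw [speedDensity, speedDensity, ← exp_add, exp_le_exp]
  linarith [le_of_abs_le hsub]

lemma integrable_speedDensity_of_integrable_sub (hS : ∀ x y, IntervalIntegrable S volume x y)
    (hS₀ : ∀ x y, IntervalIntegrable S₀ volume x y) (hdiff : Integrable fun z => S z - S₀ z)
    {x : ℝ} (h₀ : Integrable (speedDensity S₀ x)) : Integrable (speedDensity S x) := by
  refine (h₀.const_mul (exp (2 * ∫ z, |S z - S₀ z|))).mono'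
    (continuous_speedDensity hS x).aestronglyMeasurable (.of_forall fun y => ?_)
  rw [norm_of_nonneg (speedDensity_pos S x y).le]
  exact speedDensity_le_exp_mul hS hS₀ hdiff x y

lemma integral_speedDensity_pos {x : ℝ} (h : Integrable (speedDensity S x)) :
    0 < ∫ y, speedDensity S x y :=
  integral_exp_pos h

lemma qdens_le_exp_mul (hS : ∀ x y, IntervalIntegrable S volume x y)
    (hS₀ : ∀ x y, IntervalIntegrable S₀ volume x y) (hdiff : Integrable fun z => S z - S₀ z)
    {x : ℝ} (h₀ : Integrable (speedDensity S₀ x)) :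
    qdens S₀ x ≤ exp (2 * ∫ z, |S z - S₀ z|) * qdens S x := by
  have hSx : Integrable (speedDensity S x) :=
    integrable_speedDensity_of_integrable_sub hS hS₀ hdiff h₀
  have hmono : ∫ y, speedDensity S x y
      ≤ exp (2 * ∫ z, |S z - S₀ z|) * ∫ y, speedDensity S₀ x y := by
    rw [← integral_const_mul]
    exact integral_mono hSx (h₀.const_mul _) (speedDensity_le_exp_mul hS hS₀ hdiff x)
  rw [qdens_eq_inv_integral_speedDensity hS, qdens_eq_inv_integral_speedDensity hS₀,
    ← div_eq_mul_inv, le_div_iff₀ (integral_speedDensity_pos hSx),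
    inv_mul_le_iff₀ (integral_speedDensity_pos h₀), mul_comm]
  exact hmono

lemma qdens_nonneg (S : ℝ → ℝ) (x : ℝ) : 0 ≤ qdens S x :=
  div_nonneg (exp_pos _).le (integral_nonneg fun _ => (exp_pos _).le)

lemma abs_qdens_sub_qdens_le (hS : ∀ x y, IntervalIntegrable S volume x y)
    (hS₀ : ∀ x y, IntervalIntegrable S₀ volume x y) (hdiff : Integrable fun z => S z - S₀ z)
    {x : ℝ} (h₀ : Integrable (speedDensity S₀ x)) :
    |qdens S x - qdens S₀ x| ≤ qdens S₀ x * (exp (2 * ∫ z, |S z - S₀ z|) - 1) := by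
  have hdiff' : Integrable fun z => S₀ z - S z := by
    simpa only [Pi.neg_def, neg_sub] using hdiff.neg
  have hupper : qdens S x ≤ exp (2 * ∫ z, |S z - S₀ z|) * qdens S₀ x := by
    simpa only [abs_sub_comm] using qdens_le_exp_mul hS₀ hS hdiff'
      (integrable_speedDensity_of_integrable_sub hS hS₀ hdiff h₀)
  exact abs_sub_le_mul_sub_one
    (one_le_exp (mul_nonneg zero_le_two (integral_nonneg fun _ => abs_nonneg _)))
    (qdens_nonneg S₀ x) hupper (qdens_le_exp_mul hS hS₀ hdiff h₀)

end SpeedDensity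

section Dissipative

variable {S : ℝ → ℝ} {C k : ℝ}

lemma mul_apply_mul_le_of_dissipative (hdiss : ∀ z, z * S z ≤ C * |z| - k * z ^ 2) (y : ℝ) {t : ℝ}
    (ht : 0 < t) : y * S (y * t) ≤ C * |y| - k * y ^ 2 * t := by
  refine le_of_mul_le_mul_left ?_ ht
  calc t * (y * S (y * t)) = y * t * S (y * t) := by ring
    _ ≤ C * |y * t| - k * (y * t) ^ 2 := hdiss _
    _ = t * (C * |y| - k * y ^ 2 * t) := by rw [abs_mul, abs_of_pos ht]; ring

lemma intervalIntegral_le_of_dissipative (hS : Continuous S)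
    (hdiss : ∀ z, z * S z ≤ C * |z| - k * z ^ 2) (y : ℝ) :
    ∫ z in (0:ℝ)..y, S z ≤ C * |y| - k / 2 * y ^ 2 :=
  calc ∫ z in (0:ℝ)..y, S z = ∫ t in (0:ℝ)..1, y * S (y * t) := by simp
    _ ≤ ∫ t in (0:ℝ)..1, (C * |y| - k * y ^ 2 * t) := by
        refine intervalIntegral.integral_mono_on_of_le_Ioo zero_le_one
          (Continuous.intervalIntegrable (by fun_prop) _ _)
          (Continuous.intervalIntegrable (by fun_prop) _ _)
          fun t ht => mul_apply_mul_le_of_dissipative hdiss y ht.1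
    _ = C * |y| - k / 2 * y ^ 2 := by
        rw [intervalIntegral.integral_sub (by simp)
          (Continuous.intervalIntegrable (by fun_prop) _ _),
          intervalIntegral.integral_const, intervalIntegral.integral_const_mul, integral_id,
          smul_eq_mul]
        ring

lemma integrable_speedDensity_of_dissipative (hS : Continuous S) (hk : 0 < k)
    (hdiss : ∀ z, z * S z ≤ C * |z| - k * z ^ 2) : Integrable (speedDensity S 0) := by
  refine ((integrable_exp_neg_mul_sq (half_pos hk)).const_mul (exp (2 * C ^ 2 / k))).mono'
    (continuous_speedDensity hS.intervalIntegrable 0).aestronglyMeasurable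
    (.of_forall fun y => ?_)
  have hsquare : 2 * (C * |y|) ≤ 2 * C ^ 2 / k + k / 2 * y ^ 2 := by
    have hnonneg : 0 ≤ (2 * C - k * |y|) ^ 2 / (2 * k) := by positivity
    have hexpand : (2 * C - k * |y|) ^ 2 / (2 * k)
        = 2 * C ^ 2 / k + k / 2 * y ^ 2 - 2 * (C * |y|) := by
      rw [← sq_abs y]; field_simp; ring
    linarith
  rw [norm_of_nonneg (speedDensity_pos S 0 y).le, speedDensity, ← exp_add, exp_le_exp]
  linarith [intervalIntegral_le_of_dissipative hS hdiss y]

end Dissipative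

section SigmaL

variable {L : ℝ} {S : ℝ → ℝ}

lemma SigmaL.continuous (hS : SigmaL L S) : Continuous S :=
  hS.1.1

lemma SigmaL.apply_sub_apply_le_s15 (hS : SigmaL L S) {x y : ℝ} (hxy : x ≤ y)
    (houter : ∀ z ∈ Icc x y, L ≤ |z|) : S y - S x ≤ -(1 / L) * (y - x) := by
  obtain ⟨-, -, S', -, hS'⟩ := hS
  have hderiv : ∀ z ∈ Icc x y, HasDerivAt S (S' z) z := fun z hz => (hS' z (houter z hz)).1
  refine (convex_Icc x y).image_sub_le_mul_sub_of_deriv_le (HasDerivAt.continuousOn hderiv)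
    (fun z hz => (hderiv z (interior_subset hz)).differentiableAt.differentiableWithinAt)
    (fun z hz => ?_) x (left_mem_Icc.2 hxy) y (right_mem_Icc.2 hxy) hxy
  rw [(hderiv z (interior_subset hz)).deriv]
  exact (hS' z (houter z (interior_subset hz))).2.2

lemma SigmaL.abs_apply_le_s15 (hS : SigmaL L S) {z : ℝ} (hz : |z| ≤ L) : |S z| ≤ L :=
  hS.2.1 z hz

lemma SigmaL.mul_apply_le_of_abs_le (hS : SigmaL L S) (hL : 0 < L) {z : ℝ} (hz : |z| ≤ L) :
    z * S z ≤ (L + 1) * |z| - 1 / L * z ^ 2 := by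
  have hdrift : z * S z ≤ |z| * L :=
    calc z * S z ≤ |z| * |S z| := (le_abs_self _).trans (abs_mul z (S z)).le
      _ ≤ |z| * L := by gcongr; exact hS.abs_apply_le_s15 hz
  have hsq : 1 / L * z ^ 2 ≤ |z| :=
    calc 1 / L * z ^ 2 = |z| * |z| / L := by rw [← sq_abs]; ring
      _ ≤ |z| * L / L := by gcongr
      _ = |z| := mul_div_cancel_right₀ _ hL.ne'
  linarith

lemma SigmaL.mul_apply_le_of_le_abs (hS : SigmaL L S) (hL : 0 < L) {z : ℝ} (hz : L ≤ |z|) :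
    z * S z ≤ (L + 1) * |z| - 1 / L * z ^ 2 := by
  have hdiv : 1 / L * L = 1 := one_div_mul_cancel hL.ne'
  rcases le_abs'.1 hz with hneg | hpos
  · have hSL : -L ≤ S (-L) := neg_le_of_abs_le (hS.abs_apply_le_s15 (by rw [abs_neg, abs_of_pos hL]))
    have hslope := hS.apply_sub_apply_le_s15 hneg fun w hw => le_abs'.2 (.inl hw.2)
    have hSz : -(L + 1) - 1 / L * z ≤ S z := by linarith
    rw [abs_of_nonpos (by linarith)]
    linarith [mul_le_mul_of_nonpos_left hSz (by linarith : z ≤ 0)]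
  · have hSL : S L ≤ L := le_of_abs_le (hS.abs_apply_le_s15 (abs_of_pos hL).le)
    have hslope := hS.apply_sub_apply_le_s15 hpos fun w hw => le_abs'.2 (.inr hw.1)
    have hSz : S z ≤ L + 1 - 1 / L * z := by linarith
    rw [abs_of_nonneg (by linarith)]
    linarith [mul_le_mul_of_nonneg_left hSz (by linarith : 0 ≤ z)]

lemma SigmaL.dissipative (hS : SigmaL L S) (hL : 0 < L) (z : ℝ) :
    z * S z ≤ (L + 1) * |z| - 1 / L * z ^ 2 :=
  (le_total |z| L).elim (hS.mul_apply_le_of_abs_le hL) (hS.mul_apply_le_of_le_abs hL)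

lemma SigmaL.integrable_speedDensity (hS : SigmaL L S) (hL : 0 < L) :
    Integrable (speedDensity S 0) :=
  integrable_speedDensity_of_dissipative hS.continuous (one_div_pos.2 hL) (hS.dissipative hL)

end SigmaL

theorem stmt15_general {S S₀ : ℝ → ℝ} {c : ℝ} (hS₀ : ∀ x y, IntervalIntegrable S₀ volume x y)
    (hdiff : Integrable fun z => S z - S₀ z) (hfinite : Integrable (speedDensity S₀ 0))
    (hc : 2 * ∫ z, |S z - S₀ z| ≤ c) :
    (∀ x, |qdens S x - qdens S₀ x| ≤ qdens S₀ x * (exp c - 1)) ∧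
    ∀ q, (∀ x, qdens S₀ x ≤ q) → ∀ x, |qdens S x - qdens S₀ x| ≤ q * (exp c - 1) := by
  have hS : ∀ x y, IntervalIntegrable S volume x y := fun x y => by
    simpa only [add_sub_cancel] using (hS₀ x y).add hdiff.intervalIntegrable
  have hexp : exp (2 * ∫ z, |S z - S₀ z|) ≤ exp c := exp_le_exp.2 hc
  have hc0 : 0 ≤ c := (mul_nonneg zero_le_two (integral_nonneg fun _ => abs_nonneg _)).trans hc
  have hbound (x : ℝ) : |qdens S x - qdens S₀ x| ≤ qdens S₀ x * (exp c - 1) :=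
    (abs_qdens_sub_qdens_le hS hS₀ hdiff
      (integrable_speedDensity_of_integrable hS₀ hfinite x)).trans <|
      mul_le_mul_of_nonneg_left (sub_le_sub_right hexp 1) (qdens_nonneg S₀ x)
  exact ⟨hbound, fun q hq x => (hbound x).trans <|
    mul_le_mul_of_nonneg_right (hq x) (sub_nonneg.2 (one_le_exp hc0))⟩

/-- if `S, S_0 ∈ Σ_L` coincide outside `[a,b]` and differ by at most
`ε` on `[a,b]`, then `|q_S(x) − q_{S_0}(x)| ≤ q_{S_0}(x)(e^{4(b−a)ε} − 1)` for all
`x`; in particular any uniform upper bound `q^*` for the ergodic densities over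
`Σ_L` gives `|q_S(x) − q_{S_0}(x)| ≤ q^*(e^{4(b−a)ε} − 1)`. -/
theorem stmt15 (L a b : ℝ) (hL : 1 ≤ L) (hab : a < b) (hba : 1 ≤ b - a)
    (ε : ℝ) (hε : 0 < ε) (S S0 : ℝ → ℝ) (hS : SigmaL L S) (hS0 : SigmaL L S0)
    (heq : ∀ x ∉ Set.Icc a b, S x = S0 x)
    (hclose : ∀ x ∈ Set.Icc a b, |S x - S0 x| ≤ ε) :
    (∀ x : ℝ, |qdens S x - qdens S0 x| ≤ qdens S0 x * (Real.exp (4 * (b - a) * ε) - 1)) ∧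
    ∀ qup : ℝ, (∀ S' : ℝ → ℝ, SigmaL L S' → ∀ x : ℝ, qdens S' x ≤ qup) →
      ∀ x : ℝ, |qdens S x - qdens S0 x| ≤ qup * (Real.exp (4 * (b - a) * ε) - 1) := by
  have hL1 : 2 * ∫ x, |S x - S0 x| ≤ 4 * (b - a) * ε := by
    linarith [integral_abs_sub_le_of_eq_off_Icc hab.le heq hclose, mul_pos (sub_pos.2 hab) hε]
  obtain ⟨hpointwise, hsup⟩ := stmt15_general hS0.continuous.intervalIntegrable
    (integrable_sub_of_eq_off_Icc hS.continuous hS0.continuous heq)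
    (hS0.integrable_speedDensity (one_pos.trans_le hL)) hL1
  exact ⟨hpointwise, fun qup hqup => hsup qup (hqup S0 hS0)⟩
end
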